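/- Let E be a uniformly convex Banach space and define its modulus of convexity δ(ε) := inf{ 1 − ‖(x + y)/2‖ : x, y ∈ E, ‖x‖ ≤ 1, ‖y‖ ≤ 1, ‖x − y‖ ≥ ε } for ε > 0. Then for all v, w ∈ E with w ≠ 0 and ‖v + (1/2)w‖ ≥ ‖v‖, one has ‖v + w‖ · (1 − δ(‖w‖/(‖v‖ + ‖w‖))) ≥ ‖v + (1/2)w‖. -/

import Mathlib

/-- The modulus of convexity of a normed space `E`:
`δ(ε) = inf { 1 - ‖(x+y)/2‖ : ‖x‖ ≤ 1, ‖y‖ ≤ 1, ‖x - y‖ ≥ ε }`. -/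
noncomputable def modulusOfConvexity (E : Type*) [NormedAddCommGroup E] [NormedSpace ℝ E]
    (ε : ℝ) : ℝ :=
  sInf {d : ℝ | ∃ x y : E, ‖x‖ ≤ 1 ∧ ‖y‖ ≤ 1 ∧ ε ≤ ‖x - y‖ ∧
    d = 1 - ‖(1 / 2 : ℝ) • (x + y)‖}

/-!
The points `v` and `v + w` lie in the ball of radius `r = ‖v + w‖`: by convexity, a norm that does
not decrease from `v` to `v + (1/2)w` does not decrease from `v` to `v + w` either. Scaling by
`r⁻¹` gives two points of the unit ball at distance `‖w‖ / r ≥ ‖w‖ / (‖v‖ + ‖w‖)`, and the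
definition of the modulus of convexity bounds the norm of their midpoint, `‖v + (1/2)w‖ / r`.
-/

theorem norm_add_mul_norm_div_le {E : Type*} [SeminormedAddGroup E] (v w : E) :
    ‖v + w‖ * (‖w‖ / (‖v‖ + ‖w‖)) ≤ ‖w‖ := by
  rw [mul_div_left_comm]
  exact mul_le_of_le_one_right (norm_nonneg w)
    (div_le_one_of_le₀ (norm_add_le v w) (by positivity))

section SeminormedSpace

variable {E : Type*} [SeminormedAddCommGroup E] [NormedSpace ℝ E]

theorem norm_half_smul_add_le {x y : E} {r : ℝ} (hx : ‖x‖ ≤ r) (hy : ‖y‖ ≤ r) :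
    ‖(1 / 2 : ℝ) • (x + y)‖ ≤ r := by
  rw [norm_smul_of_nonneg one_half_pos.le]
  linarith [norm_add_le x y]

theorem norm_le_norm_add_of_norm_le_norm_add_smul {v w : E} {t : ℝ} (ht₀ : 0 < t) (ht₁ : t ≤ 1)
    (h : ‖v‖ ≤ ‖v + t • w‖) : ‖v‖ ≤ ‖v + w‖ := by
  have combination : v + t • w = (1 - t) • v + t • (v + w) := by module
  rw [combination] at h
  exact h.trans (convexOn_univ_norm.le_right_of_left_le' trivial trivial
    (sub_nonneg.mpr ht₁) ht₀ (sub_add_cancel 1 t) h)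

end SeminormedSpace

section NormedSpace

variable {E : Type*} [NormedAddCommGroup E] [NormedSpace ℝ E]

theorem norm_half_smul_add_le_one_sub_modulusOfConvexity {x y : E} {ε : ℝ}
    (hx : ‖x‖ ≤ 1) (hy : ‖y‖ ≤ 1) (hxy : ε ≤ ‖x - y‖) :
    ‖(1 / 2 : ℝ) • (x + y)‖ ≤ 1 - modulusOfConvexity E ε := by
  refine le_sub_comm.mp (csInf_le ⟨0, ?_⟩ ⟨x, y, hx, hy, hxy, rfl⟩)
  rintro _ ⟨x', y', hx', hy', -, rfl⟩
  exact sub_nonneg.mpr (norm_half_smul_add_le hx' hy')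

theorem norm_half_smul_add_le_mul_one_sub_modulusOfConvexity {x y : E} {r ε : ℝ}
    (hx : ‖x‖ ≤ r) (hy : ‖y‖ ≤ r) (hxy : r * ε ≤ ‖x - y‖) :
    ‖(1 / 2 : ℝ) • (x + y)‖ ≤ r * (1 - modulusOfConvexity E ε) := by
  obtain rfl | hr : 0 = r ∨ 0 < r := ((norm_nonneg x).trans hx).eq_or_lt
  · simp [norm_le_zero_iff.mp hx, norm_le_zero_iff.mp hy]
  have norm_inv_smul (u : E) : ‖r⁻¹ • u‖ = r⁻¹ * ‖u‖ :=
    norm_smul_of_nonneg (inv_nonneg.mpr hr.le) u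
  have norm_inv_smul_le_one {u : E} (hu : ‖u‖ ≤ r) : ‖r⁻¹ • u‖ ≤ 1 := by
    rwa [norm_inv_smul, inv_mul_le_one₀ hr]
  have separation : ε ≤ ‖r⁻¹ • x - r⁻¹ • y‖ := by
    rwa [← smul_sub, norm_inv_smul, le_inv_mul_iff₀ hr]
  have scaled := norm_half_smul_add_le_one_sub_modulusOfConvexity
    (norm_inv_smul_le_one hx) (norm_inv_smul_le_one hy) separation
  rwa [← smul_add, smul_comm, norm_inv_smul, inv_mul_le_iff₀ hr] at scaled

theorem norm_add_mul_one_sub_modulus_ge_general {v w : E} (h : ‖v‖ ≤ ‖v + w‖) :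
    ‖v + (1 / 2 : ℝ) • w‖ ≤ ‖v + w‖ * (1 - modulusOfConvexity E (‖w‖ / (‖v‖ + ‖w‖))) := by
  have midpoint_eq : v + (1 / 2 : ℝ) • w = (1 / 2 : ℝ) • ((v + w) + v) := by module
  rw [midpoint_eq]
  refine norm_half_smul_add_le_mul_one_sub_modulusOfConvexity le_rfl h ?_
  rw [add_sub_cancel_left]
  exact norm_add_mul_norm_div_le v w

end NormedSpace

/-- Key inequality in the proof of the paper's Lemma on uniformly convex Banach spaces:
if `‖v + (1/2)w‖ ≥ ‖v‖` and `w ≠ 0`, then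
`‖v + w‖ (1 - δ(‖w‖/(‖v‖+‖w‖))) ≥ ‖v + (1/2)w‖`. -/
theorem norm_add_mul_one_sub_modulus_ge
    (E : Type*) [NormedAddCommGroup E] [NormedSpace ℝ E]
    [UniformConvexSpace E] [CompleteSpace E]
    (v w : E) (hw : w ≠ 0) (h : ‖v‖ ≤ ‖v + (1 / 2 : ℝ) • w‖) :
    ‖v + (1 / 2 : ℝ) • w‖ ≤ ‖v + w‖ * (1 - modulusOfConvexity E (‖w‖ / (‖v‖ + ‖w‖))) :=
  norm_add_mul_one_sub_modulus_ge_general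
    (norm_le_norm_add_of_norm_le_norm_add_smul one_half_pos one_half_lt_one.le h)
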